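/- Let p ∈ Δ*_m, q ∈ Δ*_n, c ∈ ℝ^{m×n}, and let α > 0, β > 0. Let F* be the minimum over Γ(*,q) of F^reg(π) = ⟨c,π⟩ + (1/α) KL(π𝟙|p) + (1/β) KL(π|π^ref), and let π* be its (unique) minimizer. Then: (i) F* = max over (u,v) ∈ ℝ^m × ℝ^n of (1/α)⟨𝟙 − e^{−αu}, p⟩ + ⟨v, q⟩ − (1/β)⟨e^{β(u𝟙ᵀ + 𝟙vᵀ − c)}, π^ref⟩ + 1/β (exponentials entrywise); (ii) this dual problem admits a unique maximizer (u*, v*); (iii) the primal-dual relations π*𝟙 = e^{−αu*} ⊙ p and π* = e^{β(u*𝟙ᵀ + 𝟙(v*)ᵀ − c)} ⊙ π^ref hold, where ⊙ is entrywise multiplication. -/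

import Mathlib

open Finset Filter Topology ENNReal

noncomputable section

/-- Frobenius inner product `⟨c, π⟩ = ∑_{ij} c_ij π_ij`. -/
def frob {m n : ℕ} (c π : Matrix (Fin m) (Fin n) ℝ) : ℝ := ∑ i, ∑ j, c i j * π i j

/-- Row sums `π𝟙`. -/
def rowSum {m n : ℕ} (π : Matrix (Fin m) (Fin n) ℝ) : Fin m → ℝ := fun i => ∑ j, π i j

/-- Column sums `πᵀ𝟙`. -/
def colSum {m n : ℕ} (π : Matrix (Fin m) (Fin n) ℝ) : Fin n → ℝ := fun j => ∑ i, π i j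

/-- Kullback–Leibler divergence between nonnegative vectors. -/
def KLvec {k : ℕ} (a b : Fin k → ℝ) : ℝ := ∑ i, (a i * Real.log (a i / b i) - a i + b i)

/-- Kullback–Leibler divergence between nonnegative matrices. -/
def KLmat {m n : ℕ} (a b : Matrix (Fin m) (Fin n) ℝ) : ℝ :=
  ∑ i, ∑ j, (a i j * Real.log (a i j / b i j) - a i j + b i j)

/-- The tipless simplex `Δ*_k`: strictly positive entries summing to 1. -/
def simplexPos (k : ℕ) : Set (Fin k → ℝ) := {p | (∀ i, 0 < p i) ∧ ∑ i, p i = 1}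

/-- The simplex `Δ_k`: nonnegative entries summing to 1. -/
def simplexNN (k : ℕ) : Set (Fin k → ℝ) := {p | (∀ i, 0 ≤ p i) ∧ ∑ i, p i = 1}

/-- Transport plans `Γ(p, q)`. -/
def Gamma {m n : ℕ} (p : Fin m → ℝ) (q : Fin n → ℝ) : Set (Matrix (Fin m) (Fin n) ℝ) :=
  {π | (∀ i j, 0 ≤ π i j) ∧ rowSum π = p ∧ colSum π = q}

/-- Half-relaxed plans `Γ(*, q)`. -/
def GammaStar {m n : ℕ} (q : Fin n → ℝ) : Set (Matrix (Fin m) (Fin n) ℝ) :=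
  {π | (∀ i j, 0 ≤ π i j) ∧ colSum π = q}

/-- Reference plan `π^ref = (mn)⁻¹ 𝟙𝟙ᵀ`. -/
def piRef (m n : ℕ) : Matrix (Fin m) (Fin n) ℝ := fun _ _ => 1 / (m * n)

/-- Optimal transport value `OT(p,q)`. -/
def OTval {m n : ℕ} (c : Matrix (Fin m) (Fin n) ℝ) (p : Fin m → ℝ) (q : Fin n → ℝ) : ℝ :=
  ⨅ π : Gamma p q, frob c π.1

/-- Entropic OT objective `⟨c,π⟩ + β⁻¹ KL(π|π^ref)`. -/
def eotObj {m n : ℕ} (c : Matrix (Fin m) (Fin n) ℝ) (β : ℝ) (π : Matrix (Fin m) (Fin n) ℝ) : ℝ :=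
  frob c π + β⁻¹ * KLmat π (piRef m n)

/-- Entropic OT value `EOT_β(p,q)`. -/
def eotVal {m n : ℕ} (c : Matrix (Fin m) (Fin n) ℝ) (β : ℝ) (p : Fin m → ℝ) (q : Fin n → ℝ) : ℝ :=
  ⨅ π : Gamma p q, eotObj c β π.1

/-- Gibbs kernel `K = e^{-βc}` (entrywise). -/
def gibbs {m n : ℕ} (c : Matrix (Fin m) (Fin n) ℝ) (β : ℝ) : Matrix (Fin m) (Fin n) ℝ :=
  fun i j => Real.exp (-(β * c i j))

/-- Annealed Sinkhorn scaling vectors `(a_t, b_t)`: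
`b_0 = 𝟙`, `a_{t+1} = p ⊘ (K_t b_t)`, `b_{t+1} = q ⊘ (K_{t+1}ᵀ a_{t+1})`, `K_t = e^{-β_t c}`. -/
def sinkAB {m n : ℕ} (p : Fin m → ℝ) (q : Fin n → ℝ) (c : Matrix (Fin m) (Fin n) ℝ)
    (β : ℕ → ℝ) : ℕ → (Fin m → ℝ) × (Fin n → ℝ)
  | 0 => (fun _ => 1, fun _ => 1)
  | t + 1 =>
    let prev := sinkAB p q c β t
    let a : Fin m → ℝ := fun i => p i / ∑ j, gibbs c (β t) i j * prev.2 j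
    (a, fun j => q j / ∑ i, gibbs c (β (t + 1)) i j * a i)

/-- Annealed Sinkhorn primal iterate `π_t = diag(a_t) K_t diag(b_t)`. -/
def sinkPlan {m n : ℕ} (p : Fin m → ℝ) (q : Fin n → ℝ) (c : Matrix (Fin m) (Fin n) ℝ)
    (β : ℕ → ℝ) (t : ℕ) : Matrix (Fin m) (Fin n) ℝ :=
  fun i j => (sinkAB p q c β t).1 i * gibbs c (β t) i j * (sinkAB p q c β t).2 j

/-- `ℓ¹` norm of a vector. -/
def l1vec {k : ℕ} (a : Fin k → ℝ) : ℝ := ∑ i, |a i|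

/-- Oscillation semi-norm `‖c‖_osc = max c - min c`. -/
def cOsc {m n : ℕ} (c : Matrix (Fin m) (Fin n) ℝ) : ℝ :=
  (⨆ i, ⨆ j, c i j) - ⨅ i, ⨅ j, c i j

/-- `‖log p‖_∞`. -/
def logSup {k : ℕ} (p : Fin k → ℝ) : ℝ := ⨆ i, |Real.log (p i)|

/-- The rounding ("projection") procedure of Altschuler et al. (Algorithm 3). -/
def roundPlan {m n : ℕ} (p : Fin m → ℝ) (q : Fin n → ℝ) (π : Matrix (Fin m) (Fin n) ℝ) :
    Matrix (Fin m) (Fin n) ℝ :=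
  let π' : Matrix (Fin m) (Fin n) ℝ := fun i j => min 1 (p i / rowSum π i) * π i j
  let π'' : Matrix (Fin m) (Fin n) ℝ := fun i j => π' i j * min 1 (q j / colSum π' j)
  fun i j => π'' i j +
    (p i - rowSum π'' i) * (q j - colSum π'' j) / l1vec (fun i' => p i' - rowSum π'' i')

/-- Relaxed entropic objective `F^reg(π) = ⟨c,π⟩ + α⁻¹ KL(π𝟙|p) + β⁻¹ KL(π|π^ref)`. -/
def Freg {m n : ℕ} (c : Matrix (Fin m) (Fin n) ℝ) (p : Fin m → ℝ) (α β : ℝ)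
    (π : Matrix (Fin m) (Fin n) ℝ) : ℝ :=
  frob c π + α⁻¹ * KLvec (rowSum π) p + β⁻¹ * KLmat π (piRef m n)

/-- Dual functional for the relaxed entropic problem. -/
def dualFun {m n : ℕ} (p : Fin m → ℝ) (q : Fin n → ℝ) (c : Matrix (Fin m) (Fin n) ℝ)
    (α β : ℝ) (u : Fin m → ℝ) (v : Fin n → ℝ) : ℝ :=
  α⁻¹ * (∑ i, (1 - Real.exp (-(α * u i))) * p i) + ∑ j, v j * q j
    - β⁻¹ * (∑ i, ∑ j, Real.exp (β * (u i + v j - c i j)) * piRef m n i j) + β⁻¹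

/-- Dual functional of entropic OT. -/
def eotDual {m n : ℕ} (p : Fin m → ℝ) (q : Fin n → ℝ) (c : Matrix (Fin m) (Fin n) ℝ)
    (β : ℝ) (u : Fin m → ℝ) (v : Fin n → ℝ) : ℝ :=
  ∑ i, p i * u i + ∑ j, q j * v j
    + β⁻¹ * (1 - ∑ i, ∑ j, piRef m n i j * Real.exp (β * (u i + v j - c i j)))

/-- The set `C_β` of plans of the form `diag(a) e^{-βc} diag(b)` with `a, b ≥ 0`. -/
def scalingSet {m n : ℕ} (c : Matrix (Fin m) (Fin n) ℝ) (β : ℝ) :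
    Set (Matrix (Fin m) (Fin n) ℝ) :=
  {π | ∃ a : Fin m → ℝ, ∃ b : Fin n → ℝ, (∀ i, 0 ≤ a i) ∧ (∀ j, 0 ≤ b j) ∧
    π = fun i j => a i * Real.exp (-(β * c i j)) * b j}


/-!
For a plan `π` with column sums `q` and any potentials `(u, v)`, the duality gap is a sum of
Kullback–Leibler divergences,
`F^reg(π) - D(u, v) = α⁻¹ KL(π𝟙 | e^{-αu} ⊙ p) + β⁻¹ KL(π | e^{β(u𝟙ᵀ + 𝟙vᵀ - c)} ⊙ π^ref)`.
It is nonnegative and vanishes exactly when the primal-dual relations hold. Read at a fixed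
positive plan, the identity also makes `-D` coercive, so `D` has a maximizer. Stationarity there
says that the plan built from the maximizer is feasible and has zero gap, and the equality case of
the gap then gives uniqueness on both sides.
-/

section KullbackLeibler

/-- The summand `a log (a / b) - a + b` of the Kullback–Leibler divergence. It agrees with the
convention `0 log 0 = 0` because `Real.log 0 = 0`. -/
def klTerm (a b : ℝ) : ℝ := a * Real.log (a / b) - a + b

lemma klTerm_eq_mul_klFun (a : ℝ) {b : ℝ} (hb : b ≠ 0) :
    klTerm a b = b * InformationTheory.klFun (a / b) := by
  unfold klTerm InformationTheory.klFun
  field_simp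
  ring

lemma klTerm_nonneg {a b : ℝ} (ha : 0 ≤ a) (hb : 0 < b) : 0 ≤ klTerm a b := by
  rw [klTerm_eq_mul_klFun a hb.ne']
  exact mul_nonneg hb.le (InformationTheory.klFun_nonneg (div_nonneg ha hb.le))

lemma klTerm_eq_zero_iff {a b : ℝ} (ha : 0 ≤ a) (hb : 0 < b) : klTerm a b = 0 ↔ a = b := by
  rw [klTerm_eq_mul_klFun a hb.ne', mul_eq_zero, or_iff_right hb.ne',
    InformationTheory.klFun_eq_zero_iff (div_nonneg ha hb.le), div_eq_one_iff_eq hb.ne']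

lemma klTerm_exp_mul (a s : ℝ) {b : ℝ} (hb : b ≠ 0) :
    klTerm a (Real.exp s * b) = klTerm a b - a * s + (Real.exp s - 1) * b := by
  rcases eq_or_ne a 0 with rfl | ha
  · simp only [klTerm]
    ring
  · have hlog : Real.log (a / (Real.exp s * b)) = Real.log (a / b) - s := by
      rw [mul_comm, ← div_div, Real.log_div (div_ne_zero ha hb) (Real.exp_ne_zero s),
        Real.log_exp]
    rw [klTerm, klTerm, hlog]
    ring

lemma abs_le_exp_sub_self (x : ℝ) : |x| ≤ Real.exp x - x := by
  rcases le_total 0 x with hx | hx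
  · rw [abs_of_nonneg hx]
    nlinarith [Real.quadratic_le_exp_of_nonneg hx, sq_nonneg (x - 1)]
  · rw [abs_of_nonpos hx]
    linarith [Real.exp_pos x]

lemma mul_abs_sub_log_le_klTerm_exp_mul {a b : ℝ} (ha : 0 < a) (hb : 0 < b) (s : ℝ) :
    a * |s - Real.log (a / b)| ≤ klTerm a (Real.exp s * b) + a := by
  have hexp : a * Real.exp (s - Real.log (a / b)) = Real.exp s * b := by
    rw [Real.exp_sub, Real.exp_log (div_pos ha hb)]
    field_simp
  calc a * |s - Real.log (a / b)|
      ≤ a * (Real.exp (s - Real.log (a / b)) - (s - Real.log (a / b))) :=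
        mul_le_mul_of_nonneg_left (abs_le_exp_sub_self _) ha.le
    _ = klTerm a (Real.exp s * b) + a := by
        rw [klTerm_exp_mul a s hb.ne', mul_sub, hexp, klTerm]
        ring

variable {k m n : ℕ}

lemma KLvec_nonneg {a b : Fin k → ℝ} (ha : ∀ i, 0 ≤ a i) (hb : ∀ i, 0 < b i) :
    0 ≤ KLvec a b :=
  Finset.sum_nonneg fun i _ => klTerm_nonneg (ha i) (hb i)

lemma KLvec_eq_zero_iff {a b : Fin k → ℝ} (ha : ∀ i, 0 ≤ a i) (hb : ∀ i, 0 < b i) :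
    KLvec a b = 0 ↔ a = b := by
  have hterm := Finset.sum_eq_zero_iff_of_nonneg (s := Finset.univ) fun i _ =>
    klTerm_nonneg (ha i) (hb i)
  simp only [Finset.mem_univ, true_imp_iff, klTerm_eq_zero_iff (ha _) (hb _)] at hterm
  exact hterm.trans funext_iff.symm

lemma KLvec_exp_mul (a s : Fin k → ℝ) {b : Fin k → ℝ} (hb : ∀ i, b i ≠ 0) :
    KLvec a (fun i => Real.exp (s i) * b i) =
      KLvec a b - ∑ i, a i * s i + ∑ i, (Real.exp (s i) - 1) * b i := by
  simp only [KLvec, ← Finset.sum_sub_distrib, ← Finset.sum_add_distrib]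
  exact Finset.sum_congr rfl fun i _ => klTerm_exp_mul (a i) (s i) (hb i)

lemma isBounded_setOf_KLvec_exp_mul_le {a b : Fin k → ℝ} (ha : ∀ i, 0 < a i)
    (hb : ∀ i, 0 < b i) (M : ℝ) :
    Bornology.IsBounded {s : Fin k → ℝ | KLvec a (fun i => Real.exp (s i) * b i) ≤ M} := by
  refine Bornology.forall_isBounded_image_eval_iff.1 fun i =>
    (Metric.isBounded_closedBall (x := Real.log (a i / b i)) (r := (M + a i) / a i)).subset ?_
  rintro _ ⟨s, hs, rfl⟩
  have hterm : klTerm (a i) (Real.exp (s i) * b i) ≤ M :=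
    (Finset.single_le_sum (f := fun i => klTerm (a i) (Real.exp (s i) * b i))
      (fun i _ => klTerm_nonneg (ha i).le (mul_pos (Real.exp_pos _) (hb i)))
      (Finset.mem_univ i)).trans hs
  rw [Metric.mem_closedBall, Real.dist_eq, le_div_iff₀' (ha i)]
  exact (mul_abs_sub_log_le_klTerm_exp_mul (ha i) (hb i) (s i)).trans (by gcongr)

lemma KLmat_eq_sum_KLvec (a b : Matrix (Fin m) (Fin n) ℝ) :
    KLmat a b = ∑ i, KLvec (a i) (b i) := rfl

lemma KLmat_nonneg {a b : Matrix (Fin m) (Fin n) ℝ} (ha : ∀ i j, 0 ≤ a i j)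
    (hb : ∀ i j, 0 < b i j) : 0 ≤ KLmat a b :=
  Finset.sum_nonneg fun i _ => KLvec_nonneg (ha i) (hb i)

lemma KLmat_eq_zero_iff {a b : Matrix (Fin m) (Fin n) ℝ} (ha : ∀ i j, 0 ≤ a i j)
    (hb : ∀ i j, 0 < b i j) : KLmat a b = 0 ↔ a = b := by
  have hrow := Finset.sum_eq_zero_iff_of_nonneg (s := Finset.univ) fun i _ =>
    KLvec_nonneg (ha i) (hb i)
  simp only [Finset.mem_univ, true_imp_iff, KLvec_eq_zero_iff (ha _) (hb _)] at hrow
  exact hrow.trans funext_iff.symm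

lemma KLmat_exp_mul (a s : Matrix (Fin m) (Fin n) ℝ) {b : Matrix (Fin m) (Fin n) ℝ}
    (hb : ∀ i j, b i j ≠ 0) :
    KLmat a (fun i j => Real.exp (s i j) * b i j) =
      KLmat a b - ∑ i, ∑ j, a i j * s i j + ∑ i, ∑ j, (Real.exp (s i j) - 1) * b i j := by
  simp only [KLmat_eq_sum_KLvec, ← Finset.sum_sub_distrib, ← Finset.sum_add_distrib]
  exact Finset.sum_congr rfl fun i _ => KLvec_exp_mul (a i) (s i) (hb i)

lemma isBounded_setOf_KLmat_exp_mul_le {a b : Matrix (Fin m) (Fin n) ℝ}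
    (ha : ∀ i j, 0 < a i j) (hb : ∀ i j, 0 < b i j) (M : ℝ) :
    Bornology.IsBounded
      {s : Fin m → Fin n → ℝ | KLmat a (fun i j => Real.exp (s i j) * b i j) ≤ M} := by
  refine Bornology.forall_isBounded_image_eval_iff.1 fun i =>
    (isBounded_setOf_KLvec_exp_mul_le (ha i) (hb i) M).subset ?_
  rintro _ ⟨s, hs, rfl⟩
  exact (Finset.single_le_sum
    (f := fun i => KLvec (a i) (fun j => Real.exp (s i j) * b i j))
    (fun i _ => KLvec_nonneg (fun j => (ha i j).le) fun j => mul_pos (Real.exp_pos _) (hb i j))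
    (Finset.mem_univ i)).trans hs

end KullbackLeibler

section Duality

variable {m n : ℕ}

/-- The plan `e^{β(u𝟙ᵀ + 𝟙vᵀ - c)} ⊙ π^ref` attached to the potentials `(u, v)`. -/
def dualPlan (c : Matrix (Fin m) (Fin n) ℝ) (β : ℝ) (u : Fin m → ℝ) (v : Fin n → ℝ) :
    Matrix (Fin m) (Fin n) ℝ :=
  fun i j => Real.exp (β * (u i + v j - c i j)) * piRef m n i j

/-- The first marginal `e^{-αu} ⊙ p` attached to the potential `u`. -/
def dualMarginal (p : Fin m → ℝ) (α : ℝ) (u : Fin m → ℝ) : Fin m → ℝ :=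
  fun i => Real.exp (-(α * u i)) * p i

lemma piRef_pos (i : Fin m) (j : Fin n) : 0 < piRef m n i j := by
  have := i.pos
  have := j.pos
  unfold piRef
  positivity

lemma sum_piRef [NeZero m] [NeZero n] : ∑ i, ∑ j, piRef m n i j = 1 := by
  have : (m : ℝ) ≠ 0 := NeZero.ne _
  have : (n : ℝ) ≠ 0 := NeZero.ne _
  simp only [piRef, Finset.sum_const, Finset.card_univ, Fintype.card_fin, nsmul_eq_mul]
  field_simp

lemma dualPlan_pos (c : Matrix (Fin m) (Fin n) ℝ) (β : ℝ) (u : Fin m → ℝ) (v : Fin n → ℝ)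
    (i : Fin m) (j : Fin n) : 0 < dualPlan c β u v i j :=
  mul_pos (Real.exp_pos _) (piRef_pos i j)

lemma dualMarginal_pos {p : Fin m → ℝ} (hp : ∀ i, 0 < p i) (α : ℝ) (u : Fin m → ℝ)
    (i : Fin m) : 0 < dualMarginal p α u i :=
  mul_pos (Real.exp_pos _) (hp i)

lemma dualMarginal_injective {p : Fin m → ℝ} (hp : ∀ i, p i ≠ 0) {α : ℝ} (hα : α ≠ 0) :
    Function.Injective (dualMarginal p α) := fun u u' h => funext fun i => by
  have hexp := Real.exp_injective (mul_right_cancel₀ (hp i) (congrFun h i))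
  exact mul_left_cancel₀ hα (neg_injective hexp)

lemma dualPlan_injective [NeZero m] (c : Matrix (Fin m) (Fin n) ℝ) {β : ℝ} (hβ : β ≠ 0)
    (u : Fin m → ℝ) : Function.Injective (dualPlan c β u) := fun v v' h => funext fun j => by
  have hexp := Real.exp_injective
    (mul_right_cancel₀ (piRef_pos 0 j).ne' (congrFun (congrFun h 0) j))
  linarith [mul_left_cancel₀ hβ hexp]

lemma neZero_of_mem_simplexPos {p : Fin m → ℝ} (hp : p ∈ simplexPos m) : NeZero m :=
  ⟨by rintro rfl; simpa using hp.2⟩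

variable {p : Fin m → ℝ} {q : Fin n → ℝ} {α β : ℝ} {π : Matrix (Fin m) (Fin n) ℝ}

lemma sum_mul_potential_sub (c π : Matrix (Fin m) (Fin n) ℝ) (u : Fin m → ℝ) (v : Fin n → ℝ) :
    ∑ i, ∑ j, π i j * (u i + v j - c i j) =
      ∑ i, rowSum π i * u i + ∑ j, v j * colSum π j - frob c π := by
  have hcol : ∑ j, v j * colSum π j = ∑ i, ∑ j, π i j * v j := by
    rw [Finset.sum_comm]
    simp only [colSum, mul_comm (v _), Finset.sum_mul]
  rw [hcol]
  simp only [rowSum, frob, Finset.sum_mul, ← Finset.sum_add_distrib, ← Finset.sum_sub_distrib]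
  exact Finset.sum_congr rfl fun i _ => Finset.sum_congr rfl fun j _ => by ring

lemma Freg_eq_dualFun_add_gap [NeZero m] [NeZero n] (hp : ∀ i, p i ≠ 0) (hα : α ≠ 0)
    (hβ : β ≠ 0) (hπ : colSum π = q) (c : Matrix (Fin m) (Fin n) ℝ) (u : Fin m → ℝ)
    (v : Fin n → ℝ) :
    Freg c p α β π = dualFun p q c α β u v
      + (α⁻¹ * KLvec (rowSum π) (dualMarginal p α u) + β⁻¹ * KLmat π (dualPlan c β u v)) := by
  have hvec : KLvec (rowSum π) (dualMarginal p α u) = KLvec (rowSum π) p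
      + α * ∑ i, rowSum π i * u i - ∑ i, (1 - Real.exp (-(α * u i))) * p i := by
    refine (KLvec_exp_mul (rowSum π) (fun i => -(α * u i)) hp).trans ?_
    simp only [sub_mul, one_mul, mul_neg, mul_left_comm _ α, Finset.sum_neg_distrib,
      Finset.sum_sub_distrib, ← Finset.mul_sum]
    ring
  have hmat : KLmat π (dualPlan c β u v) = KLmat π (piRef m n)
      - β * (∑ i, rowSum π i * u i + ∑ j, v j * q j - frob c π)
      + (∑ i, ∑ j, Real.exp (β * (u i + v j - c i j)) * piRef m n i j - 1) := by
    rw [← hπ, ← sum_mul_potential_sub]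
    refine (KLmat_exp_mul π (fun i j => β * (u i + v j - c i j))
      fun i j => (piRef_pos i j).ne').trans ?_
    simp only [sub_mul _ (1 : ℝ), one_mul, mul_left_comm _ β, Finset.sum_sub_distrib, sum_piRef,
      ← Finset.mul_sum]
  rw [hvec, hmat, Freg, dualFun]
  field_simp
  ring

lemma rowSum_nonneg (hπ : ∀ i j, 0 ≤ π i j) (i : Fin m) : 0 ≤ rowSum π i :=
  Finset.sum_nonneg fun j _ => hπ i j

lemma dualFun_le_Freg [NeZero m] [NeZero n] (hp : ∀ i, 0 < p i) (hα : 0 < α) (hβ : 0 < β)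
    (hπ : π ∈ GammaStar q) (c : Matrix (Fin m) (Fin n) ℝ) (u : Fin m → ℝ) (v : Fin n → ℝ) :
    dualFun p q c α β u v ≤ Freg c p α β π := by
  rw [Freg_eq_dualFun_add_gap (fun i => (hp i).ne') hα.ne' hβ.ne' hπ.2 c u v]
  have hvec := KLvec_nonneg (rowSum_nonneg hπ.1) (dualMarginal_pos hp α u)
  have hmat := KLmat_nonneg hπ.1 (dualPlan_pos c β u v)
  exact le_add_of_nonneg_right (by positivity)

lemma Freg_eq_dualFun_iff [NeZero m] [NeZero n] (hp : ∀ i, 0 < p i) (hα : 0 < α) (hβ : 0 < β)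
    (hπ : π ∈ GammaStar q) (c : Matrix (Fin m) (Fin n) ℝ) (u : Fin m → ℝ) (v : Fin n → ℝ) :
    Freg c p α β π = dualFun p q c α β u v ↔
      rowSum π = dualMarginal p α u ∧ π = dualPlan c β u v := by
  have hvec := KLvec_nonneg (rowSum_nonneg hπ.1) (dualMarginal_pos hp α u)
  have hmat := KLmat_nonneg hπ.1 (dualPlan_pos c β u v)
  rw [Freg_eq_dualFun_add_gap (fun i => (hp i).ne') hα.ne' hβ.ne' hπ.2 c u v, add_eq_left,
    add_eq_zero_iff_of_nonneg (by positivity) (by positivity),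
    mul_eq_zero_iff_left (inv_ne_zero hα.ne'), mul_eq_zero_iff_left (inv_ne_zero hβ.ne'),
    KLvec_eq_zero_iff (rowSum_nonneg hπ.1) (dualMarginal_pos hp α u),
    KLmat_eq_zero_iff hπ.1 (dualPlan_pos c β u v)]

lemma exists_pos_mem_GammaStar [NeZero m] (hq : ∀ j, 0 < q j) :
    ∃ π ∈ GammaStar (m := m) q, ∀ i j, 0 < π i j := by
  have hm : (0 : ℝ) < m := Nat.cast_pos.2 (NeZero.pos m)
  have hpos : ∀ (_ : Fin m) j, 0 < q j / m := fun _ j => div_pos (hq j) hm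
  refine ⟨fun _ j => q j / m, ⟨fun i j => (hpos i j).le, funext fun j => ?_⟩, hpos⟩
  simp only [colSum, Finset.sum_const, Finset.card_univ, Fintype.card_fin, nsmul_eq_mul]
  exact mul_div_cancel₀ _ hm.ne'

lemma isBounded_of_isBounded_image_exponents [NeZero m] (c : Matrix (Fin m) (Fin n) ℝ)
    (hα : α ≠ 0) (hβ : β ≠ 0) {W : Set ((Fin m → ℝ) × (Fin n → ℝ))}
    (hu : Bornology.IsBounded ((fun w i => -(α * w.1 i)) '' W))
    (hv : Bornology.IsBounded ((fun w i j => β * (w.1 i + w.2 j - c i j)) '' W)) :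
    Bornology.IsBounded W := by
  obtain ⟨A, hA⟩ := isBounded_iff_forall_norm_le.1 hu
  obtain ⟨B, hB⟩ := isBounded_iff_forall_norm_le.1 hv
  have hfst : ∀ w ∈ W, ∀ i, |w.1 i| ≤ A / |α| := fun w hw i => by
    have h : |-(α * w.1 i)| ≤ A := (norm_le_pi_norm _ i).trans (hA _ ⟨w, hw, rfl⟩)
    rwa [abs_neg, abs_mul, ← le_div_iff₀' (abs_pos.2 hα)] at h
  have hsum : ∀ w ∈ W, ∀ j, |w.1 0 + w.2 j - c 0 j| ≤ B / |β| := fun w hw j => by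
    have h : |β * (w.1 0 + w.2 j - c 0 j)| ≤ B :=
      ((norm_le_pi_norm (fun j => β * (w.1 0 + w.2 j - c 0 j)) j).trans
        (norm_le_pi_norm (fun i j => β * (w.1 i + w.2 j - c i j)) 0)).trans (hB _ ⟨w, hw, rfl⟩)
    rwa [abs_mul, ← le_div_iff₀' (abs_pos.2 hβ)] at h
  refine Bornology.isBounded_image_fst_and_snd.1
    ⟨Bornology.forall_isBounded_image_eval_iff.1 fun i =>
      isBounded_iff_forall_norm_le.2 ⟨A / |α|, ?_⟩,
    Bornology.forall_isBounded_image_eval_iff.1 fun j =>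
      isBounded_iff_forall_norm_le.2 ⟨B / |β| + A / |α| + |c 0 j|, ?_⟩⟩
  · rintro _ ⟨_, ⟨w, hw, rfl⟩, rfl⟩
    exact hfst w hw i
  · rintro _ ⟨_, ⟨w, hw, rfl⟩, rfl⟩
    calc |w.2 j| = |(w.1 0 + w.2 j - c 0 j) - w.1 0 + c 0 j| := by ring_nf
      _ ≤ |w.1 0 + w.2 j - c 0 j| + |w.1 0| + |c 0 j| :=
          (abs_add_le _ _).trans (add_le_add_left (abs_sub _ _) _)
      _ ≤ B / |β| + A / |α| + |c 0 j| := by gcongr; exacts [hsum w hw j, hfst w hw 0]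

lemma isBounded_setOf_le_dualFun [NeZero m] [NeZero n] (hp : ∀ i, 0 < p i) (hq : ∀ j, 0 < q j)
    (hα : 0 < α) (hβ : 0 < β) (c : Matrix (Fin m) (Fin n) ℝ) (M : ℝ) :
    Bornology.IsBounded
      {w : (Fin m → ℝ) × (Fin n → ℝ) | M ≤ dualFun p q c α β w.1 w.2} := by
  obtain ⟨π, hπ, hpos⟩ := exists_pos_mem_GammaStar (m := m) hq
  have hrow : ∀ i, 0 < rowSum π i := fun i =>
    Finset.sum_pos (fun j _ => hpos i j) Finset.univ_nonempty
  have hgap : ∀ w : (Fin m → ℝ) × (Fin n → ℝ), M ≤ dualFun p q c α β w.1 w.2 →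
      KLvec (rowSum π) (dualMarginal p α w.1) ≤ α * (Freg c p α β π - M) ∧
        KLmat π (dualPlan c β w.1 w.2) ≤ β * (Freg c p α β π - M) := fun w hw => by
    have hvec := KLvec_nonneg (rowSum_nonneg hπ.1) (dualMarginal_pos hp α w.1)
    have hmat := KLmat_nonneg hπ.1 (dualPlan_pos c β w.1 w.2)
    have heq := Freg_eq_dualFun_add_gap (fun i => (hp i).ne') hα.ne' hβ.ne' hπ.2 c w.1 w.2
    rw [← inv_mul_le_iff₀ hα, ← inv_mul_le_iff₀ hβ]
    have := mul_nonneg (inv_pos.2 hα).le hvec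
    have := mul_nonneg (inv_pos.2 hβ).le hmat
    constructor <;> linarith
  refine isBounded_of_isBounded_image_exponents c hα.ne' hβ.ne'
    ((isBounded_setOf_KLvec_exp_mul_le hrow hp (α * (Freg c p α β π - M))).subset ?_)
    ((isBounded_setOf_KLmat_exp_mul_le hpos piRef_pos (β * (Freg c p α β π - M))).subset ?_)
  · rintro _ ⟨w, hw, rfl⟩
    exact (hgap w hw).1
  · rintro _ ⟨w, hw, rfl⟩
    exact (hgap w hw).2

lemma exists_forall_dualFun_le [NeZero m] [NeZero n] (hp : ∀ i, 0 < p i) (hq : ∀ j, 0 < q j)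
    (hα : 0 < α) (hβ : 0 < β) (c : Matrix (Fin m) (Fin n) ℝ) :
    ∃ u v, ∀ u' v', dualFun p q c α β u' v' ≤ dualFun p q c α β u v := by
  have hcont : Continuous fun w : (Fin m → ℝ) × (Fin n → ℝ) => dualFun p q c α β w.1 w.2 := by
    unfold dualFun
    fun_prop
  obtain ⟨w, hw⟩ := hcont.exists_forall_ge_of_isBounded 0
    (isBounded_setOf_le_dualFun hp hq hα hβ c _)
  exact ⟨w.1, w.2, fun u' v' => hw (u', v')⟩

lemma hasDerivAt_dualFun (p : Fin m → ℝ) (q : Fin n → ℝ) (c : Matrix (Fin m) (Fin n) ℝ)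
    (hα : α ≠ 0) (hβ : β ≠ 0) (u h : Fin m → ℝ) (v k : Fin n → ℝ) :
    HasDerivAt (fun t : ℝ => dualFun p q c α β (u + t • h) (v + t • k))
      (∑ i, h i * (dualMarginal p α u i - rowSum (dualPlan c β u v) i)
        + ∑ j, k j * (q j - colSum (dualPlan c β u v) j)) 0 := by
  have hline : ∀ a b : ℝ, HasDerivAt (fun t : ℝ => a + t * b) b 0 := fun a b => by
    simpa using ((hasDerivAt_id (0 : ℝ)).mul_const b).const_add a
  have hu : ∀ i, HasDerivAt (fun t : ℝ => (1 - Real.exp (-(α * (u i + t * h i)))) * p i)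
      (α * (h i * dualMarginal p α u i)) 0 := fun i => by
    refine ((((hline (u i) (h i)).const_mul α).fun_neg.exp.const_sub 1).mul_const
      (p i)).congr_deriv ?_
    simp only [dualMarginal, zero_mul, add_zero]
    ring
  have hv : ∀ j, HasDerivAt (fun t : ℝ => (v j + t * k j) * q j) (k j * q j) 0 := fun j =>
    (hline (v j) (k j)).mul_const (q j)
  have huv : ∀ i j, HasDerivAt
      (fun t : ℝ => Real.exp (β * ((u i + t * h i) + (v j + t * k j) - c i j)) * piRef m n i j)
      (β * (dualPlan c β u v i j * (h i + k j))) 0 := fun i j => by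
    refine (((((hline (u i) (h i)).fun_add (hline (v j) (k j))).sub_const
      (c i j)).const_mul β).exp.mul_const (piRef m n i j)).congr_deriv ?_
    simp only [dualPlan, zero_mul, add_zero]
    ring
  have hpair : ∑ i, ∑ j, dualPlan c β u v i j * (h i + k j) =
      ∑ i, h i * rowSum (dualPlan c β u v) i + ∑ j, k j * colSum (dualPlan c β u v) j := by
    simpa [frob, mul_comm] using sum_mul_potential_sub 0 (dualPlan c β u v) h k
  have hderiv := ((((HasDerivAt.fun_sum fun i (_ : i ∈ Finset.univ) => hu i).const_mul α⁻¹).fun_add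
    (HasDerivAt.fun_sum fun j (_ : j ∈ Finset.univ) => hv j)).fun_sub
    ((HasDerivAt.fun_sum fun i (_ : i ∈ Finset.univ) =>
      HasDerivAt.fun_sum fun j (_ : j ∈ Finset.univ) => huv i j).const_mul β⁻¹)).add_const β⁻¹
  refine hderiv.congr_deriv ?_
  simp only [← Finset.mul_sum, hpair, inv_mul_cancel_left₀ hα, inv_mul_cancel_left₀ hβ, mul_sub,
    Finset.sum_sub_distrib]
  ring

lemma marginals_dualPlan_of_forall_dualFun_le {c : Matrix (Fin m) (Fin n) ℝ} (hα : α ≠ 0)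
    (hβ : β ≠ 0) {u : Fin m → ℝ} {v : Fin n → ℝ}
    (hmax : ∀ u' v', dualFun p q c α β u' v' ≤ dualFun p q c α β u v) :
    rowSum (dualPlan c β u v) = dualMarginal p α u ∧ colSum (dualPlan c β u v) = q := by
  -- Moving along the gradient itself makes the directional derivative a sum of squares.
  set h := dualMarginal p α u - rowSum (dualPlan c β u v)
  set k := q - colSum (dualPlan c β u v)
  have hlocal : IsLocalMax (fun t : ℝ => dualFun p q c α β (u + t • h) (v + t • k)) 0 :=
    Filter.Eventually.of_forall fun t => by simpa using hmax (u + t • h) (v + t • k)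
  have hzero : h ⬝ᵥ h + k ⬝ᵥ k = 0 :=
    hlocal.hasDerivAt_eq_zero (hasDerivAt_dualFun p q c hα hβ u h v k)
  have hnonneg : ∀ {l : ℕ} (x : Fin l → ℝ), 0 ≤ x ⬝ᵥ x := fun x =>
    Finset.sum_nonneg fun i _ => mul_self_nonneg (x i)
  rw [add_eq_zero_iff_of_nonneg (hnonneg h) (hnonneg k), dotProduct_self_eq_zero,
    dotProduct_self_eq_zero] at hzero
  exact ⟨(sub_eq_zero.1 hzero.1).symm, (sub_eq_zero.1 hzero.2).symm⟩

theorem regularization_path_duality_general [NeZero m] [NeZero n] (p : Fin m → ℝ)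
    (q : Fin n → ℝ) (c : Matrix (Fin m) (Fin n) ℝ) (hp : ∀ i, 0 < p i) (hq : ∀ j, 0 < q j)
    (α β : ℝ) (hα : 0 < α) (hβ : 0 < β) :
    ∃ (ustar : Fin m → ℝ) (vstar : Fin n → ℝ),
      (∀ u v, dualFun p q c α β u v ≤ dualFun p q c α β ustar vstar) ∧
      (∀ u v, (∀ u' v', dualFun p q c α β u' v' ≤ dualFun p q c α β u v) →
        u = ustar ∧ v = vstar) ∧
      dualPlan c β ustar vstar ∈ GammaStar q ∧
      (∀ π ∈ GammaStar q,
        IsMinOn (Freg c p α β) (GammaStar q) π ↔ π = dualPlan c β ustar vstar) ∧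
      Freg c p α β (dualPlan c β ustar vstar) = dualFun p q c α β ustar vstar ∧
      rowSum (dualPlan c β ustar vstar) = dualMarginal p α ustar := by
  obtain ⟨u, v, hmax⟩ := exists_forall_dualFun_le hp hq hα hβ c
  obtain ⟨hrow, hcol⟩ := marginals_dualPlan_of_forall_dualFun_le hα.ne' hβ.ne' hmax
  have hmem : dualPlan c β u v ∈ GammaStar q := ⟨fun i j => (dualPlan_pos c β u v i j).le, hcol⟩
  have hval : Freg c p α β (dualPlan c β u v) = dualFun p q c α β u v :=
    (Freg_eq_dualFun_iff hp hα hβ hmem c u v).2 ⟨hrow, rfl⟩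
  refine ⟨u, v, hmax, fun u' v' hmax' => ?_, hmem, fun π hπ => ⟨fun hmin => ?_, ?_⟩, hval, hrow⟩
  · obtain ⟨hrow', hplan⟩ := (Freg_eq_dualFun_iff hp hα hβ hmem c u' v').1
      (hval.trans (le_antisymm (hmax' u v) (hmax u' v')))
    obtain rfl := dualMarginal_injective (fun i => (hp i).ne') hα.ne' (hrow.symm.trans hrow')
    exact ⟨rfl, (dualPlan_injective c hβ.ne' u hplan).symm⟩
  · have heq : Freg c p α β π = dualFun p q c α β u v :=
      le_antisymm ((hmin hmem).trans_eq hval) (dualFun_le_Freg hp hα hβ hπ c u v)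
    exact ((Freg_eq_dualFun_iff hp hα hβ hπ c u v).1 heq).2
  · rintro rfl
    exact isMinOn_iff.2 fun π' hπ' => hval.trans_le (dualFun_le_Freg hp hα hβ hπ' c u v)

end Duality

/-- Lemma 5: duality for the regularization path.
The minimum `F*` of `F^reg` over `Γ(*,q)` equals the maximum of the dual functional, the dual
problem has a unique maximizer `(u*,v*)`, and the primal-dual relations
`π*𝟙 = e^{-αu*} ⊙ p` and `π* = e^{β(u*𝟙ᵀ + 𝟙(v*)ᵀ - c)} ⊙ π^ref` hold. -/
theorem regularization_path_duality
    {m n : ℕ} (p : Fin m → ℝ) (q : Fin n → ℝ) (c : Matrix (Fin m) (Fin n) ℝ)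
    (hp : p ∈ simplexPos m) (hq : q ∈ simplexPos n)
    (α β : ℝ) (hα : 0 < α) (hβ : 0 < β)
    (πstar : Matrix (Fin m) (Fin n) ℝ)
    (hπstarmem : πstar ∈ GammaStar q)
    (hπstaropt : ∀ π' ∈ GammaStar (m := m) q, Freg c p α β πstar ≤ Freg c p α β π') :
    ∃ (ustar : Fin m → ℝ) (vstar : Fin n → ℝ),
      (∀ (u : Fin m → ℝ) (v : Fin n → ℝ),
        dualFun p q c α β u v ≤ dualFun p q c α β ustar vstar) ∧
      (∀ (u : Fin m → ℝ) (v : Fin n → ℝ),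
        (∀ (u' : Fin m → ℝ) (v' : Fin n → ℝ),
          dualFun p q c α β u' v' ≤ dualFun p q c α β u v) → u = ustar ∧ v = vstar) ∧
      Freg c p α β πstar = dualFun p q c α β ustar vstar ∧
      (∀ i, rowSum πstar i = Real.exp (-(α * ustar i)) * p i) ∧
      (∀ i j, πstar i j =
        Real.exp (β * (ustar i + vstar j - c i j)) * piRef m n i j) := by
  have := neZero_of_mem_simplexPos hp
  have := neZero_of_mem_simplexPos hq
  obtain ⟨u, v, hmax, huniq, -, hmin, hval, hrow⟩ :=
    regularization_path_duality_general p q c hp.1 hq.1 α β hα hβ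
  obtain rfl := (hmin πstar hπstarmem).1 (isMinOn_iff.2 hπstaropt)
  exact ⟨u, v, hmax, huniq, hval, congrFun hrow, fun _ _ => rfl⟩

end
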